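/- Let f ∈ L¹(ℝ) and suppose f̂(y) ≠ 0 for all y in a closed interval [a,b]. Then there exists a function g ∈ L¹(ℝ) such that f̂(y)·ĝ(y) = 1 for all y ∈ [a,b]. -/

import Mathlib

open MeasureTheory Real
open scoped FourierTransform

open Filter Topology ContinuousLinearMap
open scoped Convolution

section Fourier

theorem fourier_add_apply {f g : ℝ → ℂ} (hf : Integrable f) (hg : Integrable g) (y : ℝ) :
    𝓕 (fun x ↦ f x + g x) y = 𝓕 f y + 𝓕 g y := by
  simp only [fourier_eq, smul_add]
  exact integral_add ((fourierIntegral_convergent_iff y).2 hf)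
    ((fourierIntegral_convergent_iff y).2 hg)

theorem fourier_const_mul_apply (c : ℂ) (f : ℝ → ℂ) (y : ℝ) :
    𝓕 (fun x ↦ c * f x) y = c * 𝓕 f y := by
  simp only [fourier_eq, ← integral_const_mul]
  congr 1 with x
  simp only [Circle.smul_def, smul_eq_mul]
  ring

theorem fourier_sub_const_mul_apply {f g : ℝ → ℂ} (hf : Integrable f) (hg : Integrable g)
    (c : ℂ) (y : ℝ) : 𝓕 (fun x ↦ f x - c * g x) y = 𝓕 f y - c * 𝓕 g y := by
  have h := fourier_add_apply hf (hg.const_mul (-c)) y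
  rw [fourier_const_mul_apply] at h
  simpa [sub_eq_add_neg] using h

theorem fourier_char_mul (f : ℝ → ℂ) (s y : ℝ) :
    𝓕 (fun x ↦ (𝐞 (s * x) : ℂ) * f x) y = 𝓕 f (y - s) := by
  simp only [fourier_real_eq]
  congr 1 with x
  simp only [Circle.smul_def, smul_eq_mul, ← mul_assoc, ← Circle.coe_mul,
    ← AddChar.map_add_eq_mul]
  congr 4
  ring

theorem integrable_char_mul {f : ℝ → ℂ} (hf : Integrable f) (s : ℝ) :
    Integrable (fun x ↦ (𝐞 (s * x) : ℂ) * f x) := by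
  refine hf.bdd_mul (c := 1) ?_ (.of_forall fun x ↦ (Circle.norm_coe _).le)
  have : Continuous fun x : ℝ ↦ (𝐞 (s * x) : ℂ) := by fun_prop
  exact this.aestronglyMeasurable

theorem fourier_dilation (f : ℝ → ℂ) {d : ℝ} (hd : 0 < d) (y : ℝ) :
    𝓕 (fun x ↦ (d : ℂ) * f (d * x)) y = 𝓕 f (y / d) := by
  rw [fourier_const_mul_apply]
  simp only [fourier_real_eq]
  have h := Measure.integral_comp_mul_left (fun x ↦ 𝐞 (-(x * (y / d))) • f x) d
  have e : ∀ x : ℝ, d * x * (y / d) = x * y := fun x ↦ by field_simp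
  simp only [e] at h
  rw [h, abs_of_pos (inv_pos.2 hd), Complex.real_smul, ← mul_assoc]
  have : (d : ℂ) ≠ 0 := by exact_mod_cast hd.ne'
  push_cast
  rw [mul_inv_cancel₀ this, one_mul]

/-- There is an integrable function whose Fourier transform is `1` near the origin. -/
theorem exists_integrable_fourier_eventually_eq_one :
    ∃ φ : ℝ → ℂ, Integrable φ ∧ ∀ᶠ y in 𝓝 0, 𝓕 φ y = 1 := by
  let b : ContDiffBump (0 : ℝ) := default
  have h₁ : HasCompactSupport (Complex.ofReal ∘ b) := b.hasCompactSupport.comp_left rfl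
  have h₂ : ContDiff ℝ (⊤ : ℕ∞) (Complex.ofReal ∘ b) := Complex.ofRealCLM.contDiff.comp b.contDiff
  let ψ : SchwartzMap ℝ ℂ := h₁.toSchwartzMap h₂
  refine ⟨(𝓕⁻ ψ : SchwartzMap ℝ ℂ), (𝓕⁻ ψ : SchwartzMap ℝ ℂ).integrable, ?_⟩
  filter_upwards [b.eventuallyEq_one] with y hy
  rw [← SchwartzMap.fourier_coe, FourierTransform.fourier_fourierInv_eq]
  simp [ψ, hy]

end Fourier

section Convolution

theorem integral_norm_integral_le_of_integrable_prod {k : ℝ × ℝ → ℂ}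
    (hk : Integrable k (volume.prod volume)) :
    ∫ x, ‖∫ t, k (x, t)‖ ≤ ∫ t, ∫ x, ‖k (x, t)‖ := by
  rw [← integral_integral_swap (f := fun x t ↦ ‖k (x, t)‖) hk.norm]
  exact integral_mono hk.integral_prod_left.norm hk.norm.integral_prod_left
    fun x ↦ norm_integral_le_integral_norm _

theorem integral_norm_convolution_le {f g : ℝ → ℂ} (hf : Integrable f) (hg : Integrable g) :
    ∫ x, ‖(f ⋆[mul ℂ ℂ] g) x‖ ≤ (∫ x, ‖f x‖) * ∫ x, ‖g x‖ := by
  refine (integral_norm_integral_le_of_integrable_prod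
    (hf.convolution_integrand (mul ℂ ℂ) hg)).trans_eq ?_
  simp only [mul_apply', norm_mul, integral_const_mul, ← integral_mul_const]
  congr 1 with t
  rw [integral_sub_right_eq_self (fun x ↦ ‖g x‖) t]

theorem integral_norm_convolution_sub_le {f e : ℝ → ℂ} (hf : Integrable f) (he : Integrable e) :
    ∫ x, ‖(f ⋆[mul ℂ ℂ] e) x - (∫ t, f t) * e x‖ ≤ ∫ t, ‖f t‖ * ∫ x, ‖e (x - t) - e x‖ := by
  have h₁ : Integrable (fun p : ℝ × ℝ ↦ f p.2 * e (p.1 - p.2)) (volume.prod volume) :=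
    hf.convolution_integrand (mul ℂ ℂ) he
  have h₂ : Integrable (fun p : ℝ × ℝ ↦ f p.2 * e p.1) (volume.prod volume) := by
    simpa [mul_comm] using he.mul_prod hf
  have h := integral_norm_integral_le_of_integrable_prod (h₁.sub h₂)
  simp only [Pi.sub_apply, ← mul_sub, norm_mul, integral_const_mul] at h
  refine (integral_congr_ae ?_).trans_le h
  filter_upwards [hf.ae_convolution_exists (mul ℂ ℂ) he] with x hx
  have hx' : Integrable fun t ↦ f t * e (x - t) := hx
  simp only [mul_sub]
  rw [integral_sub hx' (hf.mul_const _), integral_mul_const]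
  rfl

theorem continuous_integral_norm_translate_sub {φ : ℝ → ℂ} (hφ : Integrable φ) :
    Continuous fun s : ℝ ↦ ∫ x, ‖φ (x - s) - φ x‖ := by
  have hm : MemLp φ 1 := memLp_one_iff_integrable.2 hφ
  let u : Lp ℂ 1 (volume : Measure ℝ) := hm.toLp φ
  have : Fact ((1 : ENNReal) ≠ ⊤) := ⟨ENNReal.one_ne_top⟩
  have hc : Continuous fun s : ℝ ↦ ‖(DomAddAct.mk (-s) +ᵥ u) - u‖ := by
    have : Continuous fun s : ℝ ↦ DomAddAct.mk (-s) :=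
      DomAddAct.continuous_mk.comp continuous_neg
    exact ((this.vadd continuous_const).sub continuous_const).norm
  convert hc using 2 with s
  rw [L1.norm_eq_integral_norm]
  refine integral_congr_ae ?_
  have h₁ : ((DomAddAct.mk (-s) +ᵥ u : Lp ℂ 1 (volume : Measure ℝ)) : ℝ → ℂ)
      =ᵐ[volume] fun x ↦ φ (-s +ᵥ x) := by
    rw [DomAddAct.mk_vadd_toLp]
    exact MemLp.coeFn_toLp _
  filter_upwards [Lp.coeFn_sub (DomAddAct.mk (-s) +ᵥ u) u, h₁, hm.coeFn_toLp] with x h h₁ h₂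
  rw [h, Pi.sub_apply, h₁, h₂, vadd_eq_add, neg_add_eq_sub]

theorem tendsto_integral_norm_mul_translate_sub {f φ : ℝ → ℂ} (hf : Integrable f)
    (hφ : Integrable φ) :
    Tendsto (fun d : ℝ ↦ ∫ t, ‖f t‖ * ∫ x, ‖φ (x - d * t) - φ x‖) (𝓝 0) (𝓝 0) := by
  have hG := continuous_integral_norm_translate_sub hφ
  have h := tendsto_integral_filter_of_dominated_convergence (μ := volume) (l := 𝓝 (0 : ℝ))
    (F := fun d t ↦ ‖f t‖ * ∫ x, ‖φ (x - d * t) - φ x‖) (f := fun _ ↦ 0)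
    (fun t ↦ ‖f t‖ * (2 * ∫ x, ‖φ x‖)) ?_ ?_ (hf.norm.mul_const _) ?_
  · simpa using h
  · refine .of_forall fun d ↦ hf.norm.aestronglyMeasurable.mul ?_
    exact (hG.comp (continuous_const_mul d)).aestronglyMeasurable
  · refine .of_forall fun d ↦ .of_forall fun t ↦ ?_
    rw [Real.norm_of_nonneg (by positivity)]
    gcongr
    have hs := hφ.norm.comp_sub_right (d * t)
    calc ∫ x, ‖φ (x - d * t) - φ x‖ ≤ ∫ x, (‖φ (x - d * t)‖ + ‖φ x‖) :=
          integral_mono ((hφ.comp_sub_right (d * t)).sub hφ).norm (hs.add hφ.norm)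
            fun x ↦ norm_sub_le _ _
      _ = 2 * ∫ x, ‖φ x‖ := by
          rw [integral_add hs hφ.norm, integral_sub_right_eq_self (fun x ↦ ‖φ x‖), two_mul]
  · refine .of_forall fun t ↦ ?_
    have : Continuous fun d : ℝ ↦ ‖f t‖ * ∫ x, ‖φ (x - d * t) - φ x‖ :=
      (hG.comp (continuous_mul_const t)).const_mul _
    simpa using this.tendsto 0

/-- A perturbation `c δ₀ + h` of a nonzero multiple of the Dirac mass, with `h` small in `L¹`,
is invertible as a convolution operator on `L¹`. -/
theorem exists_integrable_solution_convolution {h e : ℝ → ℂ} {c : ℂ} (hh : Integrable h)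
    (he : Integrable e) (hlt : ∫ x, ‖h x‖ < ‖c‖) :
    ∃ u : ℝ → ℂ, Integrable u ∧ ∀ᵐ x, c * u x = e x - (h ⋆[mul ℂ ℂ] u) x := by
  have hc : 0 < ‖c‖ := (integral_nonneg fun _ ↦ norm_nonneg _).trans_lt hlt
  have hc0 : c ≠ 0 := norm_pos_iff.1 hc
  have hT (u : ℝ →₁[volume] ℂ) : Integrable fun x ↦ c⁻¹ * (e x - (h ⋆[mul ℂ ℂ] u) x) :=
    (he.sub (hh.integrable_convolution _ (L1.integrable_coeFn u))).const_mul _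
  let T (u : ℝ →₁[volume] ℂ) : ℝ →₁[volume] ℂ := (hT u).toL1 _
  let K : NNReal := ⟨‖c‖⁻¹ * ∫ x, ‖h x‖, by positivity⟩
  have hK : K < 1 := by
    rw [← NNReal.coe_lt_coe]
    change ‖c‖⁻¹ * ∫ x, ‖h x‖ < 1
    rwa [inv_mul_lt_one₀ hc]
  have hcontr : ContractingWith K T := by
    refine ⟨hK, LipschitzWith.of_dist_le_mul fun u v ↦ ?_⟩
    have hu := L1.integrable_coeFn u
    have hv := L1.integrable_coeFn v
    change _ ≤ ‖c‖⁻¹ * (∫ x, ‖h x‖) * _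
    have hae : ∀ᵐ x, ‖(T u - T v : ℝ →₁[volume] ℂ) x‖
        = ‖c‖⁻¹ * ‖(h ⋆[mul ℂ ℂ] fun x ↦ u x - v x) x‖ := by
      filter_upwards [Lp.coeFn_sub (T u) (T v), (hT u).coeFn_toL1, (hT v).coeFn_toL1,
        hh.ae_convolution_exists (mul ℂ ℂ) hu, hh.ae_convolution_exists (mul ℂ ℂ) hv]
        with x h₁ h₂ h₃ h₄ h₅
      have h₆ : (h ⋆[mul ℂ ℂ] fun x ↦ u x - v x) x
          = (h ⋆[mul ℂ ℂ] u) x - (h ⋆[mul ℂ ℂ] v) x := by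
        simp only [convolution, map_sub]
        exact integral_sub h₄ h₅
      rw [h₁, Pi.sub_apply, h₂, h₃, h₆, ← mul_sub, norm_mul, norm_inv, sub_sub_sub_cancel_left,
        norm_sub_rev]
    rw [dist_eq_norm, dist_eq_norm, L1.norm_eq_integral_norm, integral_congr_ae hae,
      integral_const_mul, L1.norm_eq_integral_norm, mul_assoc,
      integral_congr_ae (f := fun x ↦ ‖(u - v : ℝ →₁[volume] ℂ) x‖) (g := fun x ↦ ‖u x - v x‖)
        ((Lp.coeFn_sub u v).fun_comp norm)]
    gcongr
    exact integral_norm_convolution_le hh (hu.sub hv)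
  let u := hcontr.fixedPoint T
  have hu : T u = u := hcontr.fixedPoint_isFixedPt
  refine ⟨u, L1.integrable_coeFn u, ?_⟩
  have := (hT u).coeFn_toL1
  change (T u : ℝ → ℂ) =ᵐ[volume] _ at this
  rw [hu] at this
  filter_upwards [this] with x hx
  rw [hx, mul_inv_cancel_left₀ hc0]

end Convolution

section LocalInverse

theorem exists_integrable_fourier_mul_eq_one_near_zero {f : ℝ → ℂ} (hf : Integrable f)
    (h0 : 𝓕 f 0 ≠ 0) :
    ∃ g : ℝ → ℂ, Integrable g ∧ ∀ᶠ y in 𝓝 0, 𝓕 f y * 𝓕 g y = 1 := by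
  obtain ⟨φ, hφ, hφ1⟩ := exists_integrable_fourier_eventually_eq_one
  have hc : 𝓕 f 0 = ∫ t, f t := by simp [fourier_real_eq]
  rw [hc] at h0
  set c := ∫ t, f t
  obtain ⟨d, hd, hdpos⟩ : ∃ d : ℝ, ∫ t, ‖f t‖ * ∫ x, ‖φ (x - d * t) - φ x‖ < ‖c‖ ∧ 0 < d :=
    ((((tendsto_integral_norm_mul_translate_sub hf hφ).mono_left
      nhdsWithin_le_nhds).eventually_lt_const (norm_pos_iff.2 h0)).and
      self_mem_nhdsWithin : ∀ᶠ d in 𝓝[>] (0 : ℝ), _).exists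
  let e : ℝ → ℂ := fun x ↦ d * φ (d * x)
  have he : Integrable e := (hφ.comp_mul_left' hdpos.ne').const_mul _
  have hconv := hf.integrable_convolution (mul ℂ ℂ) he
  let h : ℝ → ℂ := fun x ↦ (f ⋆[mul ℂ ℂ] e) x - c * e x
  have hh : Integrable h := hconv.sub (he.const_mul c)
  have hscale (t : ℝ) : ∫ x, ‖e (x - t) - e x‖ = ∫ x, ‖φ (x - d * t) - φ x‖ := by
    have := Measure.integral_comp_mul_left (fun x ↦ ‖φ (x - d * t) - φ x‖) d
    simp only [e, ← mul_sub, norm_mul, integral_const_mul, Complex.norm_real,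
      Real.norm_of_nonneg hdpos.le]
    simp only [mul_sub, this, abs_of_pos (inv_pos.2 hdpos), smul_eq_mul]
    rw [mul_inv_cancel_left₀ hdpos.ne']
  have hlt : ∫ x, ‖h x‖ < ‖c‖ := by
    refine (integral_norm_convolution_sub_le hf he).trans_lt ?_
    simpa only [hscale] using hd
  obtain ⟨u, hu, hsol⟩ := exists_integrable_solution_convolution hh he hlt
  refine ⟨u, hu, ?_⟩
  have htend : Tendsto (fun y : ℝ ↦ y / d) (𝓝 0) (𝓝 0) := by
    simpa using (continuous_id.div_const d).tendsto 0
  filter_upwards [htend.eventually hφ1] with y hy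
  have hey : 𝓕 e y = 1 := by rw [fourier_dilation φ hdpos, hy]
  have hhy : 𝓕 h y = 𝓕 f y - c := by
    rw [fourier_sub_const_mul_apply hconv he, fourier_mul_convolution_eq hf he, hey]
    simp
  have hmain := fourier_congr_ae (f₁ := fun x ↦ c * u x)
    (f₂ := fun x ↦ e x - 1 * (h ⋆[mul ℂ ℂ] u) x) (by simpa [EventuallyEq] using hsol) y
  rw [fourier_const_mul_apply, fourier_sub_const_mul_apply he
    (hh.integrable_convolution _ hu), fourier_mul_convolution_eq hh hu, hey, hhy] at hmain
  linear_combination hmain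

theorem exists_integrable_fourier_mul_eq_one_near {f : ℝ → ℂ} (hf : Integrable f) {s : ℝ}
    (hs : 𝓕 f s ≠ 0) :
    ∃ g : ℝ → ℂ, Integrable g ∧ ∀ᶠ y in 𝓝 s, 𝓕 f y * 𝓕 g y = 1 := by
  obtain ⟨g, hg, hfg⟩ := exists_integrable_fourier_mul_eq_one_near_zero
    (integrable_char_mul hf (-s)) (by rw [fourier_char_mul]; simpa using hs)
  refine ⟨_, integrable_char_mul hg s, ?_⟩
  have htend : Tendsto (fun y : ℝ ↦ y - s) (𝓝 s) (𝓝 0) := by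
    simpa using (continuous_sub_right s).tendsto s
  filter_upwards [htend.eventually hfg] with y hy
  rw [fourier_char_mul] at hy ⊢
  simpa using hy

/-- Local inverses glue, since `1 - (1 - a b)(1 - a b') = a (b + b' - a b b')`. -/
theorem exists_integrable_fourier_mul_eq_one_union {f : ℝ → ℂ} (hf : Integrable f) {S T : Set ℝ}
    (hS : ∃ g : ℝ → ℂ, Integrable g ∧ ∀ y ∈ S, 𝓕 f y * 𝓕 g y = 1)
    (hT : ∃ g : ℝ → ℂ, Integrable g ∧ ∀ y ∈ T, 𝓕 f y * 𝓕 g y = 1) :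
    ∃ g : ℝ → ℂ, Integrable g ∧ ∀ y ∈ S ∪ T, 𝓕 f y * 𝓕 g y = 1 := by
  obtain ⟨g, hg, hgS⟩ := hS
  obtain ⟨k, hk, hkT⟩ := hT
  have hfg := hf.integrable_convolution (mul ℂ ℂ) hg
  have hfgk := hfg.integrable_convolution (mul ℂ ℂ) hk
  refine ⟨fun x ↦ (g x + k x) - 1 * ((f ⋆[mul ℂ ℂ] g) ⋆[mul ℂ ℂ] k) x,
    (hg.add hk).sub (hfgk.const_mul 1), fun y hy ↦ ?_⟩
  rw [fourier_sub_const_mul_apply (f := fun x ↦ g x + k x) (hg.add hk) hfgk, fourier_add_apply hg hk,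
    fourier_mul_convolution_eq hfg hk, fourier_mul_convolution_eq hf hg]
  rcases hy with hy | hy
  · linear_combination (1 - 𝓕 f y * 𝓕 k y) * hgS y hy
  · linear_combination (1 - 𝓕 f y * 𝓕 g y) * hkT y hy

end LocalInverse

/-- **Local Wiener Theorem.** If `f ∈ L¹(ℝ)` and its Fourier transform does not vanish on
a closed interval `[a, b]`, then there exists `g ∈ L¹(ℝ)` such that `𝓕 f (y) * 𝓕 g (y) = 1`
for all `y ∈ [a, b]`. -/
theorem local_wiener
    (f : ℝ → ℂ) (hf : Integrable f) (a b : ℝ)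
    (hne : ∀ y ∈ Set.Icc a b, 𝓕 f y ≠ 0) :
    ∃ g : ℝ → ℂ, Integrable g ∧ ∀ y ∈ Set.Icc a b, 𝓕 f y * 𝓕 g y = 1 := by
  refine isCompact_Icc.induction_on
    (p := fun S ↦ ∃ g : ℝ → ℂ, Integrable g ∧ ∀ y ∈ S, 𝓕 f y * 𝓕 g y = 1)
    ⟨0, integrable_zero _ _ _, by simp⟩ ?_
    (fun S T ↦ exists_integrable_fourier_mul_eq_one_union hf) fun s hs ↦ ?_
  · rintro S T hST ⟨g, hg, h⟩
    exact ⟨g, hg, fun y hy ↦ h y (hST hy)⟩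
  · obtain ⟨g, hg, h⟩ := exists_integrable_fourier_mul_eq_one_near hf (hne s hs)
    exact ⟨_, mem_nhdsWithin_of_mem_nhds h, g, hg, fun y hy ↦ hy⟩
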